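/- Let n, N ∈ ℕ, let f be a real polynomial in n variables, and let S = ⋃_{u=1}^{N} {x ∈ ℝⁿ : P_{i,u}(x) > 0 for all i, and Q_{k,u}(x) = 0 for all k} for real polynomials P_{i,u}, Q_{k,u} in n variables. Assume that the image f(S) = {f(x) : x ∈ S} is nonempty and bounded. Then there exist w ∈ ℕ and, for each j = 1, …, w, finite families of univariate real polynomials p^{(j)} = (p_{1,j}, …, p_{v_j,j}) and q^{(j)} = (q_{1,j}, …, q_{k_j,j}) such that, setting Q = ⋃_{j=1}^{w} {t ∈ ℝ : p_{i,j}(t) ≥ 0 for all i, and q_{k,j}(t) = 0 for all k}, the following hold: (1) Q equals the closure of f(S); (2) each p_{i,j} is squarefree and, for each j, any two distinct polynomials among p_{1,j}, …, p_{v_j,j} have no common complex root; and (3) f⋆ := inf{f(x) : x ∈ S} is the least element of Q, i.e., f⋆ ∈ Q and f⋆ ≤ t for every t ∈ Q (so inf_{x ∈ S} f(x) = min_{t ∈ Q} t). -/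

import Mathlib

open Polynomial

/-- A real univariate polynomial has only simple (complex) roots: it is nonzero and
every complex root has multiplicity at most one. -/
def HasOnlySimpleComplexRoots (p : Polynomial ℝ) : Prop :=
  p ≠ 0 ∧ ∀ a : ℂ, (p.map (algebraMap ℝ ℂ)).rootMultiplicity a ≤ 1

/-- Two real univariate polynomials have a common complex root. -/
def HasCommonComplexRoot (p q : Polynomial ℝ) : Prop :=
  ∃ a : ℂ, Polynomial.aeval a p = 0 ∧ Polynomial.aeval a q = 0

/-!
The image `f(S)` is the projection to the first axis of the semialgebraic set of all `(f x, x)`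
with `x ∈ S`, so by the Tarski–Seidenberg theorem membership in it depends only on the signs of
finitely many univariate polynomials. Away from their roots these signs are locally constant, so
the closure of `f(S)` is a compact set with finite frontier, that is, a finite union of intervals
`[a, b]`. Each interval is the set where `(X - a) * (b - X)` is nonnegative, or, if `a = b`, where
`X - a` vanishes.

One variable is eliminated by following a finite list of polynomials, closed under derivatives,
pseudo-remainders and truncation, as its coefficients are specialized to `ℝ` in two ways that give
all leading coefficients the same signs. By induction on the degree, the sign conditions on the
line realized by the two specialized lists agree: at the roots of the previous polynomials the sign
of the next one is that of a pseudo-remainder, and between consecutive roots it is strictly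
monotone. Thom's lemma shows that corresponding roots occur in the same order.
-/

section TarskiSeidenberg

open Set Filter Topology SignType

section RealPolynomials

lemma sign_eq_sign_of_isPreconnected {α : Type*} [TopologicalSpace α] {s : Set α} {f : α → ℝ}
    (hs : IsPreconnected s) (hf : ContinuousOn f s) (hne : ∀ x ∈ s, f x ≠ 0) {x y : α}
    (hx : x ∈ s) (hy : y ∈ s) : sign (f x) = sign (f y) :=
  hs.constant (f := fun z => sign (f z))
    (fun z hz => (continuousAt_sign_of_ne_zero (hne z hz)).comp_continuousWithinAt (hf z hz)) hx hy

lemma eq_zero_iff_of_sign_eq {α : Type*} [Zero α] [LinearOrder α] {x y : α}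
    (h : sign x = sign y) : x = 0 ↔ y = 0 := by
  rw [← sign_eq_zero_iff, h, sign_eq_zero_iff]

lemma sign_eq_sign_of_sign_sub_eq {α : Type*} [AddCommGroup α] [LinearOrder α]
    [IsOrderedAddMonoid α] {a b c d : α} (h : sign (b - a) = sign (d - c))
    (hbc : sign b = sign c) (had : sign a = sign d) : sign a = sign b := by
  have sign_mono {x y : α} (hxy : x ≤ y) : sign x ≤ sign y := SignType.sign.monotone hxy
  rcases lt_trichotomy a b with hab | rfl | hab
  · rw [sign_pos (sub_pos.2 hab), eq_comm, sign_eq_one_iff, sub_pos] at h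
    exact (sign_mono hab.le).antisymm (hbc ▸ had ▸ sign_mono h.le)
  · rfl
  · rw [sign_neg (sub_neg.2 hab), eq_comm, sign_eq_neg_one_iff, sub_neg] at h
    exact (had ▸ hbc ▸ sign_mono h.le).antisymm (sign_mono hab.le)

lemma mem_uIoo_iff_mul_pos {α : Type*} [Ring α] [LinearOrder α] [IsStrictOrderedRing α]
    {a b d t : α} (h : 0 < d * (b - a)) :
    t ∈ uIoo a b ↔ 0 < d * (t - a) ∧ 0 < d * (b - t) := by
  rcases pos_and_pos_or_neg_and_neg_of_mul_pos h with ⟨hd, hab⟩ | ⟨hd, hab⟩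
  · rw [uIoo_of_lt (sub_pos.1 hab), mul_pos_iff_of_pos_left hd, mul_pos_iff_of_pos_left hd,
      sub_pos, sub_pos, mem_Ioo]
  · rw [uIoo_of_gt (sub_neg.1 hab), ← neg_mul_neg, ← neg_mul_neg d,
      mul_pos_iff_of_pos_left (neg_pos.2 hd), mul_pos_iff_of_pos_left (neg_pos.2 hd),
      neg_sub, neg_sub, sub_pos, sub_pos, mem_Ioo, and_comm]

lemma uIcc_subset_insert_uIoo {α : Type*} [LinearOrder α] {a b c : α} (hc : c ∈ uIoo a b) :
    uIcc a c ⊆ insert a (uIoo a b) := by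
  intro t ht
  rcases lt_trichotomy a b with h | rfl | h
  · rw [uIoo_of_lt h] at hc ⊢
    rw [uIcc_of_le hc.1.le] at ht
    exact ht.1.eq_or_lt.imp Eq.symm fun hat => ⟨hat, ht.2.trans_lt hc.2⟩
  · simp at hc
  · rw [uIoo_of_gt h] at hc ⊢
    rw [uIcc_of_ge hc.2.le] at ht
    exact ht.2.eq_or_lt.imp id fun hat => ⟨hc.1.trans_le ht.1, hat⟩

variable {p : ℝ[X]} {a b : ℝ}

lemma exists_mem_uIoo_sign_eq {f : ℝ → ℝ} (hf : ContinuousOn f (uIcc a b)) {σ : SignType}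
    (ha : sign (f a) < σ) (hb : 0 < f b) : ∃ c ∈ uIoo a b, sign (f c) = σ := by
  obtain ⟨v, hav, hvb, rfl⟩ : ∃ v, f a < v ∧ v < f b ∧ sign v = σ := by
    cases σ with
    | zero => exact ⟨0, not_le.1 fun h => ha.not_ge (sign_nonneg_iff.2 h), hb, sign_zero⟩
    | neg => exact absurd ha (SignType.not_lt_neg_one _)
    | pos =>
      have hfa : f a ≤ 0 := not_lt.1 fun h => ha.ne (sign_pos h)
      exact ⟨f b / 2, by linarith, by linarith, sign_pos (by linarith)⟩
  suffices v ∈ f '' uIoo a b from this.imp fun c hc => ⟨hc.1, congrArg _ hc.2⟩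
  rcases le_total a b with h | h
  · exact uIoo_of_le h ▸ intermediate_value_Ioo h (uIcc_of_le h ▸ hf) ⟨hav, hvb⟩
  · exact uIoo_of_ge h ▸ intermediate_value_Ioo' h (uIcc_of_ge h ▸ hf) ⟨hav, hvb⟩

lemma exists_derivative_eval_mul_sub_eq (p : ℝ[X]) (hab : a ≠ b) :
    ∃ c ∈ uIoo a b, p.derivative.eval c * (b - a) = p.eval b - p.eval a := by
  wlog h : a < b generalizing a b
  · obtain ⟨c, hc, hslope⟩ := this hab.symm (lt_of_le_of_ne (not_lt.1 h) hab.symm)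
    exact ⟨c, uIoo_comm a b ▸ hc, by linear_combination -hslope⟩
  obtain ⟨c, hc, hslope⟩ := exists_deriv_eq_slope (fun t => p.eval t) h
    p.continuous.continuousOn p.differentiable.differentiableOn
  rw [Polynomial.deriv, eq_div_iff (sub_ne_zero.2 hab.symm)] at hslope
  exact ⟨c, uIoo_of_lt h ▸ hc, hslope⟩

lemma sign_eval_sub_eval_of_derivative {σ : SignType} (hab : a < b)
    (h : ∀ t ∈ Icc a b, sign (p.derivative.eval t) = σ) : sign (p.eval b - p.eval a) = σ := by
  obtain ⟨c, hc, hslope⟩ := exists_derivative_eval_mul_sub_eq p hab.ne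
  rw [uIoo_of_lt hab] at hc
  rw [← hslope, sign_mul, sign_pos (sub_pos.2 hab), mul_one, h c (Ioo_subset_Icc_self hc)]

lemma eval_lt_eval_of_derivative_ne_zero (hpos : 0 < p.derivative.eval a * (b - a))
    (hne : ∀ t ∈ uIoo a b, p.derivative.eval t ≠ 0) : p.eval a < p.eval b := by
  have hab : a ≠ b := fun h => by simp [h] at hpos
  obtain ⟨c, hc, hslope⟩ := exists_derivative_eval_mul_sub_eq p hab
  have hsign : sign (p.derivative.eval a) = sign (p.derivative.eval c) := by
    refine sign_eq_sign_of_isPreconnected isPreconnected_uIcc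
      p.derivative.continuous.continuousOn (fun t ht => ?_) left_mem_uIcc right_mem_uIcc
    rcases uIcc_subset_insert_uIoo hc ht with rfl | ht
    · exact left_ne_zero_of_mul hpos.ne'
    · exact hne t ht
  rw [← sub_pos, ← sign_eq_one_iff, ← hslope, sign_mul, ← hsign, ← sign_mul,
    sign_eq_one_iff.2 hpos]

lemma exists_eval_pos_of_derivative_ne_zero (ha : p.derivative.eval a ≠ 0)
    (hne : ∀ t, 0 < p.derivative.eval a * (t - a) → p.derivative.eval t ≠ 0) :
    ∃ b, 0 < p.derivative.eval a * (b - a) ∧ 0 < p.eval b := by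
  set δ := p.derivative.eval a
  -- Along the ray `c ↦ δ * c + a`, `0 < c`, the polynomial exceeds its value at `a`.
  let q : ℝ[X] := p.comp (C δ * X + C a)
  have hq (c : ℝ) : q.eval c = p.eval (δ * c + a) := by simp [q]
  have hray {c : ℝ} (hc : 0 < c) : 0 < δ * (δ * c + a - a) := by
    have := mul_self_pos.2 ha
    rw [add_sub_cancel_right, ← mul_assoc]
    positivity
  have hgt {c : ℝ} (hc : 0 < c) : p.eval a < q.eval c :=
    hq c ▸ eval_lt_eval_of_derivative_ne_zero (hray hc)
      fun t ht => hne t ((mem_uIoo_iff_mul_pos (hray hc)).1 ht).1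
  have hdeg : 0 < q.degree := by
    by_contra hdeg
    have hconst := eq_C_of_degree_le_zero (not_lt.1 hdeg)
    have h1 := hgt one_pos
    have h0 : q.eval 0 = p.eval a := by simp [hq]
    rw [← h0, hconst] at h1
    simp at h1
  have hlead : 0 ≤ q.leadingCoeff := by
    by_contra hlead
    obtain ⟨c, hclt, hc⟩ := ((q.tendsto_atBot_of_leadingCoeff_nonpos hdeg
      (not_le.1 hlead).le).eventually_lt_atBot (p.eval a) |>.and (eventually_gt_atTop 0)).exists
    exact (hgt hc).not_gt hclt
  obtain ⟨c, hcpos, hc⟩ := ((q.tendsto_atTop_of_leadingCoeff_nonneg hdeg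
    hlead).eventually_gt_atTop 0 |>.and (eventually_gt_atTop 0)).exists
  exact ⟨δ * c + a, hray hc, hq c ▸ hcpos⟩

end RealPolynomials

/-- `R` matches the points of `Z` with those of `Z'`, and compares any related pair of points with
the matched pairs in the same order. `Z` and `Z'` are to be the roots of two lists of polynomials
arising from the same formal list, and `R` the relation "all signs in the lists agree". -/
structure IsOrderMatching (Z Z' : Set ℝ) (R : ℝ → ℝ → Prop) : Prop where
  exists_right : ∀ z ∈ Z, ∃ z' ∈ Z', R z z'
  exists_left : ∀ z' ∈ Z', ∃ z ∈ Z, R z z'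
  sign_sub_eq : ∀ {z z' w w'}, z ∈ Z → R z z' → R w w' → sign (w - z) = sign (w' - z')

namespace IsOrderMatching

variable {Z Z' : Set ℝ} {R : ℝ → ℝ → Prop} {y y₀ : ℝ}

lemma notMem_right (h : IsOrderMatching Z Z' R) (hR : R y y₀) (hy : y ∉ Z) : y₀ ∉ Z' := by
  intro hy₀
  obtain ⟨z, hz, hzy₀⟩ := h.exists_left y₀ hy₀
  have hsub := h.sign_sub_eq hz hzy₀ hR
  rw [sub_self, sign_zero, sign_eq_zero_iff, sub_eq_zero] at hsub
  exact hy (hsub ▸ hz)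

lemma mul_sub_pos_iff (h : IsOrderMatching Z Z' R) {z z' w w' : ℝ} (hz : z ∈ Z) (hzz' : R z z')
    (hww' : R w w') (d : ℝ) : 0 < d * (z - w) ↔ 0 < d * (z' - w') := by
  rw [← sign_eq_one_iff, ← sign_eq_one_iff, ← neg_sub w, ← neg_sub w', sign_mul, sign_mul,
    Left.sign_neg, Left.sign_neg, h.sign_sub_eq hz hzz' hww']

/-- In the direction of the sign of `d`, either the next points of `Z` after `y` and of `Z'` after
`y₀` are matched, or `Z'` has no point after `y₀`. -/
lemma exists_next (h : IsOrderMatching Z Z' R) (hZ' : Z'.Finite) (hR : R y y₀) (d : ℝ) :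
    (∃ b ∈ Z, ∃ b' ∈ Z', R b b' ∧ 0 < d * (b - y) ∧ Disjoint (uIoo y b) Z ∧
      Disjoint (uIoo y₀ b') Z') ∨ ∀ t ∈ Z', ¬ 0 < d * (t - y₀) := by
  rw [or_iff_not_imp_right]
  intro hafter
  push Not at hafter
  obtain ⟨b', ⟨hb', hy₀b'⟩, hmin⟩ := (hZ'.subset (sep_subset Z' fun t => 0 < d * (t - y₀))
    ).exists_minimalFor (fun t => d * (t - y₀)) _ hafter
  obtain ⟨b, hb, hbb'⟩ := h.exists_left b' hb'
  have hyb : 0 < d * (b - y) := (h.mul_sub_pos_iff hb hbb' hR d).2 hy₀b'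
  have hnext {t : ℝ} (ht : t ∈ Z') (hy₀t : 0 < d * (t - y₀)) : ¬ 0 < d * (b' - t) := by
    intro htb'
    have := hmin ⟨ht, hy₀t⟩ (by linarith)
    linarith
  refine ⟨b, hb, b', hb', hbb', hyb, disjoint_left.2 fun t ht htZ => ?_,
    disjoint_left.2 fun t ht htZ' => ?_⟩
  · obtain ⟨hyt, htb⟩ := (mem_uIoo_iff_mul_pos hyb).1 ht
    obtain ⟨t', ht', htt'⟩ := h.exists_right t htZ
    exact hnext ht' ((h.mul_sub_pos_iff htZ htt' hR d).1 hyt)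
      ((h.mul_sub_pos_iff hb hbb' htt' d).1 htb)
  · obtain ⟨hy₀t, htb'⟩ := (mem_uIoo_iff_mul_pos hy₀b').1 ht
    exact hnext htZ' hy₀t htb'

lemma exists_eval_pos (h : IsOrderMatching Z Z' R) (hZ' : Z'.Finite) {p p' : ℝ[X]}
    (hp : ∀ t ∉ Z, p.derivative.eval t ≠ 0) (hp' : ∀ t ∉ Z', p'.derivative.eval t ≠ 0)
    (hsign : ∀ z ∈ Z, ∀ z' ∈ Z', R z z' → sign (p.eval z) = sign (p'.eval z'))
    (hder : sign (p.derivative.eval y) = sign (p'.derivative.eval y₀))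
    (hR : R y y₀) (hy : y ∉ Z) (hpy : 0 ≤ p.eval y) :
    ∃ T, Disjoint (uIoo y₀ T) Z' ∧ 0 < p'.eval T := by
  rcases h.exists_next hZ' hR (p.derivative.eval y) with
    ⟨b, hb, b', hb', hbb', hyb, hZ, hZ'⟩ | hlast
  · have hpb : 0 < p.eval b := hpy.trans_lt
      (eval_lt_eval_of_derivative_ne_zero hyb fun t ht => hp t (hZ.notMem_of_mem_left ht))
    exact ⟨b', hZ', sign_eq_one_iff.1 (hsign b hb b' hb' hbb' ▸ sign_pos hpb)⟩
  · have hray {t : ℝ} (ht : 0 < p'.derivative.eval y₀ * (t - y₀)) : t ∉ Z' := by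
      rw [← sign_eq_one_iff, sign_mul, ← hder, ← sign_mul, sign_eq_one_iff] at ht
      exact fun htZ' => hlast t htZ' ht
    obtain ⟨T, hT, hpT⟩ := exists_eval_pos_of_derivative_ne_zero
      (hp' y₀ (h.notMem_right hR hy)) fun t ht => hp' t (hray ht)
    exact ⟨T, disjoint_left.2 fun t ht => hray ((mem_uIoo_iff_mul_pos hT).1 ht).1, hpT⟩

lemma exists_sign_eval_eq_of_lt (h : IsOrderMatching Z Z' R) (hZ' : Z'.Finite) {p p' : ℝ[X]}
    (hp : ∀ t ∉ Z, p.derivative.eval t ≠ 0) (hp' : ∀ t ∉ Z', p'.derivative.eval t ≠ 0)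
    (hsign : ∀ z ∈ Z, ∀ z' ∈ Z', R z z' → sign (p.eval z) = sign (p'.eval z'))
    (hder : sign (p.derivative.eval y) = sign (p'.derivative.eval y₀))
    (hR : R y y₀) (hy : y ∉ Z) (hlt : sign (p'.eval y₀) < sign (p.eval y)) :
    ∃ y', Disjoint (uIcc y₀ y') Z' ∧ sign (p'.eval y') = sign (p.eval y) := by
  have hpy : 0 ≤ p.eval y := by
    by_contra hneg
    rw [sign_neg (not_le.1 hneg)] at hlt
    exact SignType.not_lt_neg_one _ hlt
  obtain ⟨T, hT, hpT⟩ := h.exists_eval_pos hZ' hp hp' hsign hder hR hy hpy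
  obtain ⟨y', hy', hpy'⟩ := exists_mem_uIoo_sign_eq p'.continuous.continuousOn hlt hpT
  exact ⟨y', (disjoint_insert_left.2 ⟨h.notMem_right hR hy, hT⟩).mono_left
    (uIcc_subset_insert_uIoo hy'), hpy'⟩

lemma exists_sign_eval_eq (h : IsOrderMatching Z Z' R) (hZ' : Z'.Finite) {p p' : ℝ[X]}
    (hp : ∀ t ∉ Z, p.derivative.eval t ≠ 0) (hp' : ∀ t ∉ Z', p'.derivative.eval t ≠ 0)
    (hsign : ∀ z ∈ Z, ∀ z' ∈ Z', R z z' → sign (p.eval z) = sign (p'.eval z'))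
    (hder : sign (p.derivative.eval y) = sign (p'.derivative.eval y₀))
    (hR : R y y₀) (hy : y ∉ Z) :
    ∃ y', Disjoint (uIcc y₀ y') Z' ∧ sign (p'.eval y') = sign (p.eval y) := by
  rcases lt_trichotomy (sign (p'.eval y₀)) (sign (p.eval y)) with hlt | heq | hgt
  · exact h.exists_sign_eval_eq_of_lt hZ' hp hp' hsign hder hR hy hlt
  · exact ⟨y₀, by simpa using h.notMem_right hR hy, heq⟩
  · have hneg := h.exists_sign_eval_eq_of_lt hZ' (p := -p) (p' := -p') (y := y)
      (y₀ := y₀) (by simpa using hp) (by simpa using hp')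
    simp only [derivative_neg, eval_neg, Left.sign_neg, neg_inj] at hneg
    refine hneg hsign hder hR hy ?_
    revert hgt
    generalize sign (p'.eval y₀) = σ
    generalize sign (p.eval y) = τ
    revert σ τ
    decide

end IsOrderMatching


section Specialization

lemma exists_pseudoRem {R : Type*} [CommRing R] {q : R[X]} (p : R[X]) (hq : q.natDegree ≠ 0) :
    ∃ r : R[X], r.natDegree < q.natDegree ∧
      ∃ (k : ℕ) (s : R[X]), C q.leadingCoeff ^ k * p = q * s + r := by
  induction hd : p.natDegree using Nat.strong_induction_on generalizing p with
  | h d ih =>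
    rcases lt_or_ge p.natDegree q.natDegree with hlt | hge
    · exact ⟨p, hlt, 0, 0, by simp⟩
    · obtain ⟨r, hr, k, s, hs⟩ := ih _ (hd ▸ natDegree_cancelLeads_lt_of_natDegree_le_natDegree
        hge (by lia)) (q.cancelLeads p) rfl
      refine ⟨r, hr, k + 1, s + C q.leadingCoeff ^ k * C p.leadingCoeff *
        X ^ (p.natDegree - q.natDegree), ?_⟩
      rw [cancelLeads, Nat.sub_eq_zero_of_le hge] at hs
      linear_combination hs

variable {R K : Type*} [CommSemiring R] [CommSemiring K] {p : R[X]} {e : R →+* K}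

lemma natDegree_eraseLead_lt (hp : p.natDegree ≠ 0) : p.eraseLead.natDegree < p.natDegree :=
  (eraseLead_natDegree_le p).trans_lt (by lia)

lemma eval_map_of_natDegree_eq_zero (hp : p.natDegree = 0) (e : R →+* K) (y : K) :
    (p.map e).eval y = e p.leadingCoeff := by
  rw [eq_C_of_natDegree_eq_zero hp, leadingCoeff_C, map_C, eval_C]

lemma map_eraseLead_of_leadingCoeff_eq_zero (h : e p.leadingCoeff = 0) :
    p.eraseLead.map e = p.map e := by
  conv_rhs => rw [← p.eraseLead_add_C_mul_X_pow, Polynomial.map_add, Polynomial.map_mul, map_C, h,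
    C_0, zero_mul, add_zero]

lemma derivative_map_ne_zero [IsAddTorsionFree K] (hlc : e p.leadingCoeff ≠ 0)
    (hdeg : p.natDegree ≠ 0) : (derivative p).map e ≠ 0 := by
  rw [← derivative_map]
  intro h
  exact hdeg (natDegree_map_of_leadingCoeff_ne_zero e hlc ▸ derivative_eq_zero.1 h)

lemma eval₂Hom_cons_eq_eval₂RingHom_finSuccEquiv {n : ℕ} (e : R →+* K) (y : K)
    (x : Fin n → K) (p : MvPolynomial (Fin (n + 1)) R) :
    MvPolynomial.eval₂Hom e (Fin.cons y x) p =
      eval₂RingHom (MvPolynomial.eval₂Hom e x) y (MvPolynomial.finSuccEquiv R n p) := by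
  change _ = ((eval₂RingHom (MvPolynomial.eval₂Hom e x) y).comp
    (MvPolynomial.finSuccEquiv R n : _ →+* _)) p
  congr 1
  refine MvPolynomial.ringHom_ext (fun r => ?_) fun i => ?_
  · simp [MvPolynomial.finSuccEquiv_apply]
  · refine Fin.cases ?_ (fun i => ?_) i
    · simp [MvPolynomial.finSuccEquiv_X_zero]
    · simp [MvPolynomial.finSuccEquiv_X_succ]

end Specialization

lemma exists_finset_superset_closed {T : Type*} (deg : T → ℕ)
    (op : T → T → Finset T) (hop : ∀ p q, ∀ r ∈ op p q, deg r < deg p ∧ deg r < deg q)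
    (F : Finset T) : ∃ F', F ⊆ F' ∧ ∀ p ∈ F', ∀ q ∈ F', op p q ⊆ F' := by
  classical
  suffices h : ∀ k, ∃ F', F ⊆ F' ∧
      ∀ p ∈ F', ∀ q ∈ F', F.sup deg < deg p + k → F.sup deg < deg q + k → op p q ⊆ F' by
    obtain ⟨F', hF, hop⟩ := h (F.sup deg + 1)
    exact ⟨F', hF, fun p hp q hq => hop p hp q hq (by lia) (by lia)⟩
  -- The elements added at each stage have smaller degree than those `op` was applied to.
  intro k
  induction k with
  | zero => exact ⟨F, subset_rfl, fun p hp _ _ h => absurd (F.le_sup (f := deg) hp) (by lia)⟩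
  | succ k ih =>
    obtain ⟨F', hF, hop'⟩ := ih
    refine ⟨F' ∪ F'.biUnion fun p => F'.biUnion (op p), hF.trans Finset.subset_union_left, ?_⟩
    have mem_of_lt : ∀ r ∈ F' ∪ F'.biUnion fun p => F'.biUnion (op p),
        F.sup deg < deg r + (k + 1) → r ∈ F' := by
      intro r hr hdeg
      simp only [Finset.mem_union, Finset.mem_biUnion] at hr
      obtain hr | ⟨p, hp, q, hq, hr⟩ := hr
      · exact hr
      · have := hop p q r hr
        exact hop' p hp q hq (by lia) (by lia) hr
    intro p hp q hq hdp hdq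
    exact ((Finset.subset_biUnion_of_mem (op p) (mem_of_lt q hq hdq)).trans
      (Finset.subset_biUnion_of_mem (fun p => F'.biUnion (op p)) (mem_of_lt p hp hdp))).trans
      Finset.subset_union_right

section Elimination

variable {R : Type*} [CommRing R] {F s : Finset R[X]} {a p q : R[X]} {e e' e'' : R →+* ℝ}
  {y y' y'' z z' w w' : ℝ}

/-- A finite list of polynomials to which elimination by one variable applies: it is stable under
differentiation, under deleting leading terms (which accounts for leading coefficients vanishing
under specialization) and under pseudo-remainders. -/
structure IsEliminationClosed (F : Finset R[X]) : Prop where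
  derivative_mem : ∀ p ∈ F, p.natDegree ≠ 0 → derivative p ∈ F
  eraseLead_mem : ∀ p ∈ F, p.natDegree ≠ 0 → p.eraseLead ∈ F
  exists_pseudoRem_mem : ∀ p ∈ F, ∀ q ∈ F, q.natDegree ≠ 0 → q.natDegree ≤ p.natDegree →
    ∃ r ∈ F, r.natDegree < q.natDegree ∧
      ∃ (k : ℕ) (s : R[X]), C q.leadingCoeff ^ k * p = q * s + r

lemma exists_isEliminationClosed_superset (F : Finset R[X]) :
    ∃ F', F ⊆ F' ∧ IsEliminationClosed F' := by
  classical
  choose! rem rem_lt rem_eq using fun p q : R[X] => exists_pseudoRem (q := q) p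
  let op (p q : R[X]) : Finset R[X] :=
    if q.natDegree ≠ 0 ∧ q.natDegree ≤ p.natDegree then {derivative q, q.eraseLead, rem p q} else ∅
  have hop (p q r : R[X]) (hr : r ∈ op p q) :
      r.natDegree < p.natDegree ∧ r.natDegree < q.natDegree := by
    by_cases h : q.natDegree ≠ 0 ∧ q.natDegree ≤ p.natDegree
    · suffices hlt : r.natDegree < q.natDegree from ⟨hlt.trans_le h.2, hlt⟩
      simp only [op, if_pos h, Finset.mem_insert, Finset.mem_singleton] at hr
      rcases hr with rfl | rfl | rfl
      exacts [natDegree_derivative_lt h.1, natDegree_eraseLead_lt h.1, rem_lt p q h.1]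
    · simp [op, h] at hr
  obtain ⟨F', hF, hclosed⟩ := exists_finset_superset_closed natDegree op hop F
  refine ⟨F', hF, fun p hp h => ?_, fun p hp h => ?_, fun p hp q hq h hle => ?_⟩
  · exact hclosed p hp p hp (by simp [op, h])
  · exact hclosed p hp p hp (by simp [op, h])
  · exact ⟨rem p q, hclosed p hp q hq (by simp [op, h, hle]), rem_lt p q h, rem_eq p q h⟩

lemma mem_of_mem_insert_of_natDegree_lt [DecidableEq R[X]] (hp : p ∈ insert a s)
    (h : p.natDegree < a.natDegree) : p ∈ s :=
  Finset.mem_of_mem_insert_of_ne hp fun hpa => h.ne (congrArg natDegree hpa)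

lemma IsEliminationClosed.of_insert [DecidableEq R[X]] (h : IsEliminationClosed (insert a s))
    (hmax : ∀ p ∈ s, p.natDegree ≤ a.natDegree) : IsEliminationClosed s where
  derivative_mem p hp hdeg := mem_of_mem_insert_of_natDegree_lt
    (h.derivative_mem p (Finset.mem_insert_of_mem hp) hdeg)
    ((natDegree_derivative_lt hdeg).trans_le (hmax p hp))
  eraseLead_mem p hp hdeg := mem_of_mem_insert_of_natDegree_lt
    (h.eraseLead_mem p (Finset.mem_insert_of_mem hp) hdeg)
    ((natDegree_eraseLead_lt hdeg).trans_le (hmax p hp))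
  exists_pseudoRem_mem p hp q hq hdeg hle := by
    obtain ⟨r, hr, hlt, hdiv⟩ := h.exists_pseudoRem_mem p (Finset.mem_insert_of_mem hp) q
      (Finset.mem_insert_of_mem hq) hdeg hle
    exact ⟨r, mem_of_mem_insert_of_natDegree_lt hr (hlt.trans_le (hmax q hq)), hlt, hdiv⟩

lemma IsEliminationClosed.derivative_mem_of_insert [DecidableEq R[X]]
    (h : IsEliminationClosed (insert a s)) (ha : a.natDegree ≠ 0) : derivative a ∈ s :=
  mem_of_mem_insert_of_natDegree_lt (h.derivative_mem a (Finset.mem_insert_self a s) ha)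
    (natDegree_derivative_lt ha)

lemma IsEliminationClosed.eraseLead_mem_of_insert [DecidableEq R[X]]
    (h : IsEliminationClosed (insert a s)) (ha : a.natDegree ≠ 0) : a.eraseLead ∈ s :=
  mem_of_mem_insert_of_natDegree_lt (h.eraseLead_mem a (Finset.mem_insert_self a s) ha)
    (natDegree_eraseLead_lt ha)

@[elab_as_elim]
theorem IsEliminationClosed.induction_on_max_natDegree [DecidableEq R[X]]
    {motive : ∀ F : Finset R[X], IsEliminationClosed F → Prop}
    (empty : ∀ h, motive ∅ h)
    (insert : ∀ a s (h : IsEliminationClosed (insert a s))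
      (hmax : ∀ p ∈ s, p.natDegree ≤ a.natDegree), motive s (h.of_insert hmax) →
      motive (insert a s) h) (hF : IsEliminationClosed F) : motive F hF :=
  Finset.induction_on_max_value (motive := fun F => ∀ hF, motive F hF) natDegree F empty
    (fun a s _ hmax ih hF => insert a s hF hmax (ih (hF.of_insert hmax))) hF

/-- The specialization of `F` along `e` has the same signs at `y` as the specialization along `e'`
has at `y'`. -/
def SameSigns (F : Finset R[X]) (e e' : R →+* ℝ) (y y' : ℝ) : Prop :=
  ∀ p ∈ F, sign ((p.map e).eval y) = sign ((p.map e').eval y')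

namespace SameSigns

lemma symm (h : SameSigns F e e' y y') : SameSigns F e' e y' y := fun p hp => (h p hp).symm

lemma trans (h : SameSigns F e e' y y') (h' : SameSigns F e' e'' y' y'') :
    SameSigns F e e'' y y'' := fun p hp => (h p hp).trans (h' p hp)

lemma mono (h : SameSigns F e e' y y') (hs : s ⊆ F) : SameSigns s e e' y y' :=
  fun p hp => h p (hs hp)

lemma insert_of_sign_eq [DecidableEq R[X]]
    (ha : sign ((a.map e).eval y) = sign ((a.map e').eval y')) (h : SameSigns s e e' y y') :
    SameSigns (insert a s) e e' y y' :=
  (Finset.forall_mem_insert ..).2 ⟨ha, h⟩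

end SameSigns

lemma SameSigns.sign_eval_sub_eval (hder : derivative a ∈ s) (hyw : y < w)
    (h : ∀ u ∈ Icc y w, SameSigns s e e y u) :
    sign ((a.map e).eval w - (a.map e).eval y) = sign ((a.derivative.map e).eval y) :=
  sign_eval_sub_eval_of_derivative hyw fun u hu => by rw [derivative_map, h u hu _ hder]

/-- **Thom's lemma** -/
lemma SameSigns.of_mem_Icc (hF : IsEliminationClosed F) (h : SameSigns F e e y w) {t : ℝ}
    (ht : t ∈ Icc y w) : SameSigns F e e y t := by
  classical
  induction hF using IsEliminationClosed.induction_on_max_natDegree generalizing t with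
  | empty => simp [SameSigns]
  | insert a s hF _ ih =>
    have ih {u : ℝ} (hu : u ∈ Icc y w) : SameSigns s e e y u :=
      ih (h.mono (Finset.subset_insert a s)) hu
    refine SameSigns.insert_of_sign_eq ?_ (ih ht)
    by_cases hdeg : a.natDegree = 0
    · simp only [eval_map_of_natDegree_eq_zero hdeg]
    rcases ht.1.eq_or_lt with rfl | hyt
    · rfl
    rcases ht.2.eq_or_lt with rfl | htw
    · exact h a (Finset.mem_insert_self a s)
    have hder := hF.derivative_mem_of_insert hdeg
    refine sign_eq_sign_of_sign_sub_eq ?_ rfl (h a (Finset.mem_insert_self a s))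
    rw [sign_eval_sub_eval hder hyt fun u hu => ih (Icc_subset_Icc_right ht.2 hu),
      sign_eval_sub_eval hder htw fun u hu =>
        (ih ht).symm.trans (ih (Icc_subset_Icc_left ht.1 hu)), ih ht _ hder]

/-- Two sign conditions realized at corresponding points of two specializations occur in the same
order: otherwise both members of the pair realize the same condition. -/
lemma SameSigns.of_le_of_le (hF : IsEliminationClosed F) (hz : SameSigns F e e' z z')
    (hw : SameSigns F e e' w w') (hzw : z ≤ w) (hwz' : w' ≤ z') : SameSigns F e e z w := by
  classical
  induction hF using IsEliminationClosed.induction_on_max_natDegree with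
  | empty => simp [SameSigns]
  | insert a s hF hmax ih =>
    have hs := hF.of_insert hmax
    have hz_s := hz.mono (Finset.subset_insert a s)
    have hw_s := hw.mono (Finset.subset_insert a s)
    have hzw_s := ih hz_s hw_s
    have hwz'_s := (hw_s.symm.trans hzw_s.symm).trans hz_s
    refine SameSigns.insert_of_sign_eq ?_ hzw_s
    by_cases hdeg : a.natDegree = 0
    · simp only [eval_map_of_natDegree_eq_zero hdeg]
    rcases hzw.eq_or_lt with rfl | hzw
    · rfl
    rcases hwz'.eq_or_lt with rfl | hwz'
    · exact (hz.trans hw.symm) a (Finset.mem_insert_self a s)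
    have hder := hF.derivative_mem_of_insert hdeg
    refine sign_eq_sign_of_sign_sub_eq ?_ (hw a (Finset.mem_insert_self a s))
      (hz a (Finset.mem_insert_self a s))
    rw [sign_eval_sub_eval hder hzw fun u hu => hzw_s.of_mem_Icc hs hu,
      sign_eval_sub_eval hder hwz' fun u hu => hwz'_s.of_mem_Icc hs hu, hzw_s _ hder, hw_s _ hder]

/-- The points of the line where the specialization along `e` of a polynomial of `F` may change
sign: the roots of all specializations that are nonzero. -/
noncomputable def breakpoints (F : Finset R[X]) (e : R →+* ℝ) : Finset ℝ :=
  F.biUnion fun q => (q.map e).roots.toFinset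

lemma mem_breakpoints : z ∈ breakpoints F e ↔ ∃ q ∈ F, q.map e ≠ 0 ∧ (q.map e).eval z = 0 := by
  simp [breakpoints]

lemma eval_ne_zero_of_notMem_breakpoints (hz : z ∉ breakpoints F e) (hq : q ∈ F)
    (h0 : q.map e ≠ 0) : (q.map e).eval z ≠ 0 :=
  fun h => hz (mem_breakpoints.2 ⟨q, hq, h0, h⟩)

lemma SameSigns.of_disjoint_breakpoints (h : Disjoint (uIcc y y') (breakpoints F e)) :
    SameSigns F e e y y' := by
  intro q hq
  by_cases h0 : q.map e = 0
  · simp [h0]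
  exact sign_eq_sign_of_isPreconnected isPreconnected_uIcc (q.map e).continuous.continuousOn
    (fun _ ht => eval_ne_zero_of_notMem_breakpoints (h.notMem_of_mem_left ht) hq h0)
    left_mem_uIcc right_mem_uIcc

lemma SameSigns.eq_of_mem_breakpoints (hF : IsEliminationClosed F) (h : SameSigns F e e z w)
    (hz : z ∈ breakpoints F e) : z = w := by
  obtain ⟨q, hq, hq0, hqz⟩ := mem_breakpoints.1 hz
  have hvanish {a b : ℝ} (hab : a < b) (ht : ∀ t ∈ Icc a b, SameSigns F e e z t) : False := by
    refine hq0 (eq_zero_of_infinite_isRoot _ ((Icc_infinite hab).mono fun t htab => ?_))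
    exact (eq_zero_iff_of_sign_eq (ht t htab q hq)).1 hqz
  rcases lt_trichotomy z w with hzw | hzw | hzw
  · exact (hvanish hzw fun t ht => h.of_mem_Icc hF ht).elim
  · exact hzw
  · exact (hvanish hzw fun t ht => h.trans (h.symm.of_mem_Icc hF ht)).elim

lemma IsEliminationClosed.exists_map_eq_leadingCoeff_ne_zero (hF : IsEliminationClosed F)
    (hq : q ∈ F) (h0 : q.map e ≠ 0) : ∃ p ∈ F, e p.leadingCoeff ≠ 0 ∧ p.map e = q.map e := by
  induction hd : q.natDegree using Nat.strong_induction_on generalizing q with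
  | h d ih =>
    by_cases hlc0 : e q.leadingCoeff = 0
    · have hdeg : q.natDegree ≠ 0 := by
        intro hdeg
        rw [eq_C_of_natDegree_eq_zero hdeg] at h0 hlc0
        simp_all
      have hmap := map_eraseLead_of_leadingCoeff_eq_zero hlc0
      rw [← hmap] at h0 ⊢
      exact ih _ (hd ▸ natDegree_eraseLead_lt hdeg) (hF.eraseLead_mem q hq hdeg) h0 rfl
    · exact ⟨q, hq, hlc0, rfl⟩

lemma SameSigns.mem_breakpoints_right (hF : IsEliminationClosed F)
    (hlc : ∀ p ∈ F, sign (e p.leadingCoeff) = sign (e' p.leadingCoeff))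
    (h : SameSigns F e e' z z') (hz : z ∈ breakpoints F e) : z' ∈ breakpoints F e' := by
  obtain ⟨q, hq, h0, hqz⟩ := mem_breakpoints.1 hz
  obtain ⟨p, hp, hlcp, hpe⟩ := hF.exists_map_eq_leadingCoeff_ne_zero hq h0
  refine mem_breakpoints.2 ⟨p, hp, fun hp0 => hlcp ?_, ?_⟩
  · rw [eq_zero_iff_of_sign_eq (hlc p hp), leadingCoeff, ← coeff_map, hp0, coeff_zero]
  · exact (eq_zero_iff_of_sign_eq (h p hp)).1 (hpe ▸ hqz)

lemma SameSigns.sign_sub_eq (hF : IsEliminationClosed F)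
    (hlc : ∀ p ∈ F, sign (e p.leadingCoeff) = sign (e' p.leadingCoeff))
    (hz : z ∈ breakpoints F e) (hzz' : SameSigns F e e' z z') (hww' : SameSigns F e e' w w') :
    sign (w - z) = sign (w' - z') := by
  have hz' := hzz'.mem_breakpoints_right hF hlc hz
  rcases lt_trichotomy z w with hzw | rfl | hzw
  · have hzw' : z' < w' := by
      by_contra hle
      exact hzw.ne ((hzz'.of_le_of_le hF hww' hzw.le (not_lt.1 hle)).eq_of_mem_breakpoints hF hz)
    rw [sign_pos (sub_pos.2 hzw), sign_pos (sub_pos.2 hzw')]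
  · rw [(hzz'.symm.trans hww').eq_of_mem_breakpoints hF hz', sub_self, sub_self]
  · have hzw' : w' < z' := by
      by_contra hle
      exact hzw.ne' ((hww'.of_le_of_le hF hzz' hzw.le
        (not_lt.1 hle)).symm.eq_of_mem_breakpoints hF hz)
    rw [sign_neg (sub_neg.2 hzw), sign_neg (sub_neg.2 hzw')]

lemma IsEliminationClosed.isOrderMatching_breakpoints (hF : IsEliminationClosed F)
    (hlc : ∀ p ∈ F, sign (e p.leadingCoeff) = sign (e' p.leadingCoeff))
    (hright : ∀ y, ∃ y', SameSigns F e e' y y') (hleft : ∀ y', ∃ y, SameSigns F e' e y' y) :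
    IsOrderMatching (breakpoints F e) (breakpoints F e') (SameSigns F e e') where
  exists_right z hz := (hright z).imp fun _ h => ⟨h.mem_breakpoints_right hF hlc hz, h⟩
  exists_left z' hz' := (hleft z').imp fun _ h =>
    ⟨h.mem_breakpoints_right hF (fun p hp => (hlc p hp).symm) hz', h.symm⟩
  sign_sub_eq := SameSigns.sign_sub_eq hF hlc

/-- At a root of `q ∈ s`, the sign of `a` is that of its pseudo-remainder modulo a truncation of
`q`, up to the sign of a power of the leading coefficient. -/
lemma SameSigns.sign_eval_eq_of_mem_breakpoints [DecidableEq R[X]]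
    (hF : IsEliminationClosed (insert a s)) (hmax : ∀ p ∈ s, p.natDegree ≤ a.natDegree)
    (hlc : ∀ p ∈ s, sign (e p.leadingCoeff) = sign (e' p.leadingCoeff))
    (h : SameSigns s e e' z z') (hz : z ∈ breakpoints s e) :
    sign ((a.map e).eval z) = sign ((a.map e').eval z') := by
  obtain ⟨q, hq, h0, hqz⟩ := mem_breakpoints.1 hz
  obtain ⟨p, hp, hlcp, hpe⟩ :=
    (hF.of_insert hmax).exists_map_eq_leadingCoeff_ne_zero hq h0
  rw [← hpe] at hqz
  have hdeg : p.natDegree ≠ 0 := fun hdeg =>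
    hlcp (eval_map_of_natDegree_eq_zero hdeg e z ▸ hqz)
  have hpz' : (p.map e').eval z' = 0 := (eq_zero_iff_of_sign_eq (h p hp)).1 hqz
  obtain ⟨r, hr, hlt, k, t, hdiv⟩ := hF.exists_pseudoRem_mem a (Finset.mem_insert_self a s) p
    (Finset.mem_insert_of_mem hp) hdeg (hmax p hp)
  have hr := mem_of_mem_insert_of_natDegree_lt hr (hlt.trans_le (hmax p hp))
  have hrem {e : R →+* ℝ} {z : ℝ} (hpz : (p.map e).eval z = 0) :
      e p.leadingCoeff ^ k * (a.map e).eval z = (r.map e).eval z := by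
    have := congrArg (fun q => (q.map e).eval z) hdiv
    simpa [hpz] using this
  have hsign := h r hr
  rw [← hrem hqz, ← hrem hpz', sign_mul, sign_mul, sign_pow, sign_pow, hlc p hp] at hsign
  refine mul_left_cancel₀ (pow_ne_zero k ?_) hsign
  rwa [ne_eq, sign_eq_zero_iff, ← eq_zero_iff_of_sign_eq (hlc p hp)]

theorem IsEliminationClosed.exists_sameSigns (hF : IsEliminationClosed F)
    (hlc : ∀ p ∈ F, sign (e p.leadingCoeff) = sign (e' p.leadingCoeff)) (y : ℝ) :
    ∃ y', SameSigns F e e' y y' := by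
  classical
  induction hF using IsEliminationClosed.induction_on_max_natDegree generalizing e e' y with
  | empty => simp [SameSigns]
  | insert a s hF hmax ih =>
    have hs := hF.of_insert hmax
    obtain ⟨hlca, hlcs⟩ := (Finset.forall_mem_insert ..).1 hlc
    obtain ⟨y₀, hy₀⟩ := ih hlcs y
    by_cases hdeg : a.natDegree = 0
    · refine ⟨y₀, hy₀.insert_of_sign_eq ?_⟩
      simpa only [eval_map_of_natDegree_eq_zero hdeg] using hlca
    by_cases hlc0 : e a.leadingCoeff = 0
    · refine ⟨y₀, hy₀.insert_of_sign_eq ?_⟩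
      rw [← map_eraseLead_of_leadingCoeff_eq_zero hlc0, ← map_eraseLead_of_leadingCoeff_eq_zero
        ((eq_zero_iff_of_sign_eq hlca).1 hlc0)]
      exact hy₀ _ (hF.eraseLead_mem_of_insert hdeg)
    by_cases hy : y ∈ breakpoints s e
    · exact ⟨y₀, hy₀.insert_of_sign_eq (hy₀.sign_eval_eq_of_mem_breakpoints hF hmax hlcs hy)⟩
    have hder := hF.derivative_mem_of_insert hdeg
    have hder0 := derivative_map_ne_zero hlc0 hdeg
    have hder0' := derivative_map_ne_zero (mt (eq_zero_iff_of_sign_eq hlca).2 hlc0) hdeg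
    have hmatch := hs.isOrderMatching_breakpoints hlcs (ih hlcs)
      (ih fun p hp => (hlcs p hp).symm)
    obtain ⟨y', hy', hsign⟩ := hmatch.exists_sign_eval_eq (p := a.map e) (p' := a.map e')
      (breakpoints s e').finite_toSet
      (fun t ht => derivative_map a e ▸ eval_ne_zero_of_notMem_breakpoints ht hder hder0)
      (fun t ht => derivative_map a e' ▸ eval_ne_zero_of_notMem_breakpoints ht hder hder0')
      (fun z hz z' _ h => h.sign_eval_eq_of_mem_breakpoints hF hmax hlcs hz)
      (by simpa only [derivative_map] using hy₀ _ hder) hy₀ hy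
    exact ⟨y', (hy₀.trans (.of_disjoint_breakpoints hy')).insert_of_sign_eq hsign.symm⟩

theorem exists_finset_forall_exists_sameSigns (F : Finset R[X]) :
    ∃ G : Finset R, ∀ e e' : R →+* ℝ, (∀ g ∈ G, sign (e g) = sign (e' g)) →
      ∀ y, ∃ y', SameSigns F e e' y y' := by
  classical
  obtain ⟨F', hF, hclosed⟩ := exists_isEliminationClosed_superset F
  exact ⟨F'.image leadingCoeff, fun e e' h y => (hclosed.exists_sameSigns
    (fun p hp => h _ (Finset.mem_image_of_mem _ hp)) y).imp fun y' hy' => hy'.mono hF⟩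

end Elimination

section SignDetermined

variable {α β R R' : Type*} [CommRing R] [CommRing R'] {ev : α → R →+* ℝ} {ev' : β → R' →+* ℝ}
  {A B : Set α}

/-- Membership in `A` depends only on the signs of finitely many elements of the ring `R`, whose
elements are regarded as functions on `α` through `ev`. For `α = ℝⁿ` and polynomial functions these
are the semialgebraic sets. -/
def IsSignDetermined (ev : α → R →+* ℝ) (A : Set α) : Prop :=
  ∃ G : Finset R, ∀ a b, (∀ g ∈ G, sign (ev a g) = sign (ev b g)) → a ∈ A → b ∈ A

namespace IsSignDetermined

lemma setOf_pos (ev : α → R →+* ℝ) (g : R) : IsSignDetermined ev {a | 0 < ev a g} :=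
  ⟨{g}, fun _ _ h ha => sign_eq_one_iff.1 (h g (Finset.mem_singleton_self g) ▸ sign_pos ha)⟩

lemma setOf_eq_zero (ev : α → R →+* ℝ) (g : R) : IsSignDetermined ev {a | ev a g = 0} :=
  ⟨{g}, fun _ _ h => (eq_zero_iff_of_sign_eq (h g (Finset.mem_singleton_self g))).1⟩

lemma inter (hA : IsSignDetermined ev A) (hB : IsSignDetermined ev B) :
    IsSignDetermined ev (A ∩ B) := by
  classical
  obtain ⟨G, hG⟩ := hA
  obtain ⟨H, hH⟩ := hB
  exact ⟨G ∪ H, fun a b h =>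
    And.imp (hG a b fun g hg => h g (Finset.mem_union_left H hg))
      (hH a b fun g hg => h g (Finset.mem_union_right G hg))⟩

lemma exists_forall_of_finite {ι : Type*} [Finite ι] {A : ι → Set α}
    (hA : ∀ i, IsSignDetermined ev (A i)) :
    ∃ G : Finset R, ∀ a b, (∀ g ∈ G, sign (ev a g) = sign (ev b g)) →
      ∀ i, a ∈ A i → b ∈ A i := by
  classical
  have := Fintype.ofFinite ι
  choose G hG using hA
  exact ⟨Finset.univ.biUnion G, fun a b h i => hG i a b fun g hg =>
    h g (Finset.mem_biUnion.2 ⟨i, Finset.mem_univ i, hg⟩)⟩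

lemma iInter {ι : Type*} [Finite ι] {A : ι → Set α} (hA : ∀ i, IsSignDetermined ev (A i)) :
    IsSignDetermined ev (⋂ i, A i) :=
  (exists_forall_of_finite hA).imp fun _ hG a b h ha =>
    mem_iInter.2 fun i => hG a b h i (mem_iInter.1 ha i)

lemma iUnion {ι : Type*} [Finite ι] {A : ι → Set α} (hA : ∀ i, IsSignDetermined ev (A i)) :
    IsSignDetermined ev (⋃ i, A i) :=
  (exists_forall_of_finite hA).imp fun _ hG a b h ha =>
    mem_iUnion.2 ((mem_iUnion.1 ha).imp fun i => hG a b h i)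

lemma preimage {A : Set β} (hA : IsSignDetermined ev' A) (π : α → β) (φ : R' → R)
    (h : ∀ a r, ev' (π a) r = ev a (φ r)) : IsSignDetermined ev (π ⁻¹' A) := by
  classical
  obtain ⟨G, hG⟩ := hA
  refine ⟨G.image φ, fun a b hab => hG (π a) (π b) fun g hg => ?_⟩
  rw [h, h]
  exact hab _ (Finset.mem_image_of_mem φ hg)

/-- **Tarski–Seidenberg theorem**, elimination of one variable. -/
theorem image_fst {A : Set (α × ℝ)}
    (hA : IsSignDetermined (fun x : α × ℝ => eval₂RingHom (ev x.1) x.2) A) :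
    IsSignDetermined ev (Prod.fst '' A) := by
  obtain ⟨F, hF⟩ := hA
  obtain ⟨G, hG⟩ := exists_finset_forall_exists_sameSigns F
  refine ⟨G, ?_⟩
  rintro _ b hab ⟨⟨a, y⟩, hay, rfl⟩
  obtain ⟨y', hy'⟩ := hG (ev a) (ev b) hab y
  exact ⟨(b, y'), hF (a, y) (b, y') (by simpa [SameSigns, eval_map] using hy') hay, rfl⟩

/-- **Tarski–Seidenberg theorem** -/
theorem image_fst_fin {n : ℕ} {A : Set (α × (Fin n → ℝ))}
    (hA : IsSignDetermined (fun x : α × (Fin n → ℝ) => MvPolynomial.eval₂Hom (ev x.1) x.2) A) :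
    IsSignDetermined ev (Prod.fst '' A) := by
  induction n with
  | zero =>
    convert hA.preimage (ev := ev) (fun a => (a, Fin.elim0))
      MvPolynomial.constantCoeff fun a p => ?_
    · ext a
      simp [Subsingleton.elim _ (Fin.elim0 : Fin 0 → ℝ)]
    · obtain ⟨r, rfl⟩ := MvPolynomial.C_surjective (Fin 0) p
      simp
  | succ n ih =>
    let π (x : (α × (Fin n → ℝ)) × ℝ) : α × (Fin (n + 1) → ℝ) := (x.1.1, Fin.cons x.2 x.1.2)
    have hπ : IsSignDetermined (fun x : (α × (Fin n → ℝ)) × ℝ =>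
        eval₂RingHom (MvPolynomial.eval₂Hom (ev x.1.1) x.1.2) x.2) (π ⁻¹' A) :=
      hA.preimage π (MvPolynomial.finSuccEquiv R n) fun x p =>
        eval₂Hom_cons_eq_eval₂RingHom_finSuccEquiv (ev x.1.1) x.2 x.1.2 p
    convert ih hπ.image_fst using 1
    have hπ_surj : π.Surjective := fun x =>
      ⟨((x.1, Fin.tail x.2), x.2 0), Prod.ext rfl (Fin.cons_self_tail x.2)⟩
    conv_lhs => rw [← image_preimage_eq A hπ_surj]
    rw [image_image, image_image]

theorem image_mvPolynomial_eval {n : ℕ} {S : Set (Fin n → ℝ)}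
    (hS : IsSignDetermined (MvPolynomial.eval (R := ℝ)) S) (f : MvPolynomial (Fin n) ℝ) :
    IsSignDetermined evalRingHom ((fun x => MvPolynomial.eval x f) '' S) := by
  let ev (x : ℝ × (Fin n → ℝ)) : MvPolynomial (Fin n) ℝ[X] →+* ℝ :=
    MvPolynomial.eval₂Hom (evalRingHom x.1) x.2
  have ev_map (x : ℝ × (Fin n → ℝ)) (p : MvPolynomial (Fin n) ℝ) :
      MvPolynomial.eval x.2 p = ev x (MvPolynomial.map C p) := by
    have hC : (evalRingHom x.1).comp C = RingHom.id ℝ := by ext; simp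
    simp [ev, hC, MvPolynomial.eval₂_id]
  have ev_graph (x : ℝ × (Fin n → ℝ)) :
      ev x (MvPolynomial.map C f - MvPolynomial.C X) = 0 ↔ MvPolynomial.eval x.2 f = x.1 := by
    rw [map_sub, ← ev_map, sub_eq_zero, MvPolynomial.coe_eval₂Hom, MvPolynomial.eval₂_C,
      coe_evalRingHom, eval_X]
  have hgraph := (hS.preimage (ev := ev) Prod.snd (MvPolynomial.map C) ev_map).inter
    (setOf_eq_zero ev (MvPolynomial.map C f - MvPolynomial.C X))
  convert hgraph.image_fst_fin
  ext t
  simp only [mem_image, mem_inter_iff, mem_preimage, mem_ofPred_eq, ev_graph, Prod.exists,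
    exists_and_right, exists_eq_right]

lemma finite_frontier {A : Set ℝ} (hA : IsSignDetermined evalRingHom A) :
    (frontier A).Finite := by
  classical
  obtain ⟨G, hG⟩ := hA
  refine (G.biUnion fun g => g.roots.toFinset).finite_toSet.subset fun t ht => ?_
  by_contra hroot
  have hlocal : ∀ᶠ u in 𝓝 t, ∀ g ∈ G, sign (g.eval u) = sign (g.eval t) := by
    refine (Filter.eventually_all_finset G).2 fun g hg => ?_
    by_cases h0 : g = 0
    · simp [h0]
    have hgt : g.eval t ≠ 0 := fun h => hroot (Finset.mem_coe.2
      (Finset.mem_biUnion.2 ⟨g, hg, by simp [h0, h]⟩))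
    have hcont : ContinuousAt (fun u => sign (g.eval u)) t :=
      (continuousAt_sign_of_ne_zero hgt).comp (f := fun u => g.eval u) g.continuousAt
    exact hcont.eventually_mem (isOpen_discrete {sign (g.eval t)} |>.mem_nhds rfl)
  by_cases htA : t ∈ A
  · exact ht.2 (mem_interior_iff_mem_nhds.2 (hlocal.mono fun u hu =>
      hG t u (fun g hg => (hu g hg).symm) htA))
  · obtain ⟨u, hu, huA⟩ := mem_closure_iff_nhds.1 ht.1 _ hlocal
    exact htA (hG u t hu huA)

end IsSignDetermined

end SignDetermined

section ClosedSets

variable {α : Type*} [ConditionallyCompleteLinearOrder α] [TopologicalSpace α] [OrderTopology α]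
  {K s : Set α} {c t : α}

lemma exists_le_mem_frontier_Icc_subset [DenselyOrdered α] (hK : IsClosed K) (ht : t ∈ K)
    (hc : c ∉ K) (hct : c ≤ t) :
    ∃ a ∈ frontier K, a ≤ t ∧ Icc a t ⊆ K := by
  have hne : (Kᶜ ∩ Iic t).Nonempty := ⟨c, hc, hct⟩
  have hbdd : BddAbove (Kᶜ ∩ Iic t) := bddAbove_Iic.mono inter_subset_right
  set a := sSup (Kᶜ ∩ Iic t)
  have hat : a ≤ t := csSup_le hne fun x hx => hx.2
  have hsub : Ioc a t ⊆ K := fun x hx => by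
    by_contra hxK
    exact hx.1.not_ge (le_csSup hbdd ⟨hxK, hx.2⟩)
  have hcl : a ∈ closure Kᶜ := closure_mono inter_subset_left (csSup_mem_closure hne hbdd)
  have ha : a ∈ K := by
    rcases hat.eq_or_lt with h | h
    · exact h ▸ ht
    · exact hK.closure_subset_iff.2 hsub (closure_Ioc h.ne ▸ left_mem_Icc.2 hat)
  refine ⟨a, ?_, hat, fun x hx => ?_⟩
  · rw [frontier_eq_closure_inter_closure]
    exact ⟨subset_closure ha, hcl⟩
  · rcases hx.1.eq_or_lt with h | h
    · exact h ▸ ha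
    · exact hsub ⟨h, hx.2⟩

lemma exists_ge_mem_frontier_Icc_subset [DenselyOrdered α] (hK : IsClosed K) (ht : t ∈ K)
    (hc : c ∉ K) (htc : t ≤ c) :
    ∃ b ∈ frontier K, t ≤ b ∧ Icc t b ⊆ K :=
  (exists_le_mem_frontier_Icc_subset (α := αᵒᵈ) hK ht hc htc).imp fun _ ⟨hb, htb, hsub⟩ =>
    ⟨hb, htb, fun _ hx => hsub hx.symm⟩

lemma exists_eq_iUnion_Icc [DenselyOrdered α] [NoMinOrder α] [NoMaxOrder α] (hK : IsCompact K)
    (hfr : (frontier K).Finite) :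
    ∃ (w : ℕ) (a b : Fin w → α), (∀ j, a j ≤ b j) ∧ K = ⋃ j, Icc (a j) (b j) := by
  let I : Set (α × α) := {x ∈ frontier K ×ˢ frontier K | x.1 ≤ x.2 ∧ Icc x.1 x.2 ⊆ K}
  have hI : I.Finite := (hfr.prod hfr).subset (sep_subset ..)
  obtain ⟨w, g, -, hg⟩ := hI.fin_param
  have hgI (j) : g j ∈ I := hg ▸ mem_range_self j
  refine ⟨w, fun j => (g j).1, fun j => (g j).2, fun j => (hgI j).2.1,
    Subset.antisymm (fun t ht => ?_) (iUnion_subset fun j => (hgI j).2.2)⟩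
  obtain ⟨l, hl⟩ := hK.bddBelow
  obtain ⟨u, hu⟩ := hK.bddAbove
  obtain ⟨c, hc⟩ := exists_lt l
  obtain ⟨d, hd⟩ := exists_gt u
  obtain ⟨a, ha, hat, haK⟩ := exists_le_mem_frontier_Icc_subset hK.isClosed ht
    (fun h => hc.not_ge (hl h)) (hc.le.trans (hl ht))
  obtain ⟨b, hb, htb, hbK⟩ := exists_ge_mem_frontier_Icc_subset hK.isClosed ht
    (fun h => hd.not_ge (hu h)) ((hu ht).trans hd.le)
  have habI : (a, b) ∈ I := by
    refine ⟨⟨ha, hb⟩, hat.trans htb, ?_⟩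
    exact Icc_union_Icc_eq_Icc hat htb ▸ union_subset haK hbK
  obtain ⟨j, hj⟩ := hg ▸ habI
  exact mem_iUnion.2 ⟨j, (congrArg Prod.fst hj).trans_le hat,
    htb.trans_eq (congrArg Prod.snd hj).symm⟩

lemma isLeast_closure_csInf (hne : s.Nonempty) (hbd : BddBelow s) :
    IsLeast (closure s) (sInf s) :=
  ⟨csInf_mem_closure hne hbd,
    closure_minimal (fun _ hx => csInf_le hbd hx) isClosed_Ici⟩

end ClosedSets

lemma hasOnlySimpleComplexRoots_of_separable {p : ℝ[X]} (hp : p.Separable) :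
    HasOnlySimpleComplexRoots p :=
  ⟨hp.ne_zero, rootMultiplicity_le_one_of_separable hp.map⟩

lemma separable_X_sub_C_mul_C_sub_X {K : Type*} [Field K] {a b : K} (h : a ≠ b) :
    ((X - C a) * (C b - X) : K[X]).Separable := by
  rw [← neg_sub X (C b), mul_neg, ← neg_one_mul]
  exact ((separable_X_sub_C.mul separable_X_sub_C
    (isCoprime_X_sub_C_of_isUnit_sub (sub_ne_zero.2 h).isUnit)).unit_mul isUnit_one.neg)

lemma exists_polynomials_mem_Icc_iff {a b : ℝ} (hab : a ≤ b) :
    ∃ p q : ℝ[X], HasOnlySimpleComplexRoots p ∧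
      ∀ t, 0 ≤ p.eval t ∧ q.eval t = 0 ↔ t ∈ Icc a b := by
  rcases hab.eq_or_lt with rfl | hab
  · exact ⟨1, X - C a, hasOnlySimpleComplexRoots_of_separable separable_one, fun t => by
      simp [sub_eq_zero]⟩
  · refine ⟨(X - C a) * (C b - X), 0,
      hasOnlySimpleComplexRoots_of_separable (separable_X_sub_C_mul_C_sub_X hab.ne), fun t => ?_⟩
    simp only [eval_mul, eval_sub, eval_X, eval_C, eval_zero, and_true, mem_Icc, mul_nonneg_iff]
    constructor
    · rintro (h | h) <;> constructor <;> linarith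
    · exact fun h => .inl ⟨sub_nonneg.2 h.1, sub_nonneg.2 h.2⟩

end TarskiSeidenberg

/-- For a polynomial `f` on `ℝⁿ` and a semi-algebraic set `S ⊆ ℝⁿ`
with `f(S)` nonempty and bounded, there is a finite union
`Q = ⋃_j {t : p_{i,j}(t) ≥ 0 ∀ i, q_{k,j}(t) = 0 ∀ k}` equal to the closure of
`f(S)`, with each `p_{i,j}` squarefree and pairwise without common complex roots, and
`f⋆ = inf f(S)` is the least element of `Q`. -/
theorem attained_minimum_on_closure
    (n N : ℕ) (f : MvPolynomial (Fin n) ℝ)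
    (mP lQ : Fin N → ℕ)
    (P : (u : Fin N) → Fin (mP u) → MvPolynomial (Fin n) ℝ)
    (Qp : (u : Fin N) → Fin (lQ u) → MvPolynomial (Fin n) ℝ)
    (S : Set (Fin n → ℝ))
    (hS : S = ⋃ u, {x | (∀ i, 0 < MvPolynomial.eval x (P u i)) ∧
        ∀ k, MvPolynomial.eval x (Qp u k) = 0})
    (hne : ((fun x => MvPolynomial.eval x f) '' S).Nonempty)
    (hbd : Bornology.IsBounded ((fun x => MvPolynomial.eval x f) '' S)) :
    ∃ (w : ℕ) (v kk : Fin w → ℕ)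
      (p : (j : Fin w) → Fin (v j) → Polynomial ℝ)
      (q : (j : Fin w) → Fin (kk j) → Polynomial ℝ),
      ((⋃ j, {t : ℝ | (∀ i, 0 ≤ (p j i).eval t) ∧ ∀ k, (q j k).eval t = 0})
        = closure ((fun x => MvPolynomial.eval x f) '' S)) ∧
      (∀ j i, HasOnlySimpleComplexRoots (p j i)) ∧
      (∀ j, ∀ i i', i ≠ i' → ¬ HasCommonComplexRoot (p j i) (p j i')) ∧
      IsLeast (⋃ j, {t : ℝ | (∀ i, 0 ≤ (p j i).eval t) ∧ ∀ k, (q j k).eval t = 0})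
        (sInf ((fun x => MvPolynomial.eval x f) '' S)) := by
  have hA : IsSignDetermined evalRingHom ((fun x => MvPolynomial.eval x f) '' S) := by
    refine .image_mvPolynomial_eval ?_ f
    rw [hS]
    refine .iUnion fun u => ?_
    simp only [Set.ofPred_and, Set.ofPred_forall]
    exact .inter (.iInter fun i => .setOf_pos _ (P u i))
      (.iInter fun k => .setOf_eq_zero _ (Qp u k))
  obtain ⟨w, a, b, hab, hcl⟩ := exists_eq_iUnion_Icc hbd.isCompact_closure
    (hA.finite_frontier.subset frontier_closure_subset)
  choose p q hp hpq using fun j => exists_polynomials_mem_Icc_iff (hab j)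
  have hQ : (⋃ j, {t : ℝ | (∀ _ : Fin 1, 0 ≤ (p j).eval t) ∧ ∀ _ : Fin 1, (q j).eval t = 0})
      = closure ((fun x => MvPolynomial.eval x f) '' S) := by
    simp only [forall_const, hpq, hcl]
    rfl
  refine ⟨w, fun _ => 1, fun _ => 1, fun j _ => p j, fun j _ => q j, hQ, fun j _ => hp j,
    fun _ i i' h => absurd (Subsingleton.elim i i') h, ?_⟩
  rw [hQ]
  exact isLeast_closure_csInf hne hbd.bddBelow
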